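/- Let $X$ be a topological space. Let $\mathcal{L}X$ be the set of lower semicontinuous functions from $X$ to $[0,\infty]$, ordered pointwise. A prevision on $X$ is a Scott-continuous map $F\colon \mathcal{L}X\to[0,\infty]$ (monotone and preserving suprema of directed families) such that $F(ah)=aF(h)$ for all real $a\ge 0$ and $h\in\mathcal{L}X$ (with $0\cdot\infty=0$). It is sublinear if $F(h+h')\le F(h)+F(h')$ for all $h,h'\in\mathcal{L}X$, subnormalized if $F(\mathbf{1}+h)\le 1+F(h)$ for all $h\in\mathcal{L}X$, and normalized if $F(\mathbf{1}+h)=1+F(h)$ for all $h\in\mathcal{L}X$, where $\mathbf 1$ is the constant function $1$. Sets of previsions carry the weak topology, generated by the sets $\{F : F(h)>r\}$ for $h\in\mathcal{L}X$ and $r\in[0,\infty)$. Let $\mathrm{Pred}^\ast(X)$ be one of the following three spaces: the space of all previsions on $X$, the space of subnormalized previsions on $X$, or the space of normalized previsions on $X$; and let $\mathrm{Pred}^\ast_{\mathrm{sub}}(X)$ be its subspace of sublinear previsions. Let $\mathcal{Q}\mathrm{Pred}^\ast_{\mathrm{sub}}(X)$ be the collection of all subsets $\mathcal{Q}$ of $\mathrm{Pred}^\ast_{\mathrm{sub}}(X)$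 that are nonempty, compact in the weak topology, and of the form $\bigcap_{i\in I}\{F\in\mathrm{Pred}^\ast_{\mathrm{sub}}(X) : F(h_i)\ge 1\}$ for some family $(h_i)_{i\in I}$ of elements of $\mathcal{L}X$; equip it with the topology generated by the sets $\{\mathcal{Q}\in\mathcal{Q}\mathrm{Pred}^\ast_{\mathrm{sub}}(X) : \mathcal{Q}\subseteq U\}$, for $U$ ranging over the open subsets of $\mathrm{Pred}^\ast_{\mathrm{sub}}(X)$. Then the map $\mathrm{minP}$ sending $\mathcal{Q}$ to the prevision $h\mapsto\min_{F\in\mathcal{Q}}F(h)$ (the infimum is attained) and the map $\mathrm{nimP}$ sending $P\in\mathrm{Pred}^\ast(X)$ to $\{F\in\mathrm{Pred}^\ast_{\mathrm{sub}}(X) : P\le F \text{ pointwise}\}$ are mutually inverse homeomorphisms between $\mathcal{Q}\mathrm{Pred}^\ast_{\mathrm{sub}}(X)$ and $\mathrm{Pred}^\ast(X)$, in each of the three cases. -/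

import Mathlib

open scoped ENNReal NNReal

/-- `ℒX`: the lower semicontinuous functions from `X` to `[0,∞]`, ordered pointwise
(the order is the one that a subtype inherits from `X → ℝ≥0∞`). -/
abbrev LForm (X : Type*) [TopologicalSpace X] : Type _ :=
  {h : X → ℝ≥0∞ // LowerSemicontinuous h}

namespace LForm

variable {X : Type*} [TopologicalSpace X]

/-- Pointwise addition on `ℒX`. -/
noncomputable instance : Add (LForm X) :=
  ⟨fun h h' => ⟨fun x => h.1 x + h'.1 x, h.2.add h'.2⟩⟩

/-- Pointwise multiplication by a nonnegative real on `ℒX` (with `0 * ∞ = 0`). -/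
noncomputable instance : SMul ℝ≥0 (LForm X) :=
  ⟨fun a h => ⟨fun x => (a : ℝ≥0∞) * h.1 x,
    (ENNReal.continuous_const_mul ENNReal.coe_ne_top).comp_lowerSemicontinuous h.2
      (fun _ _ hxy => mul_le_mul_right hxy _)⟩⟩

/-- The constant function with value `1`. -/
noncomputable instance : One (LForm X) := ⟨⟨fun _ => 1, lowerSemicontinuous_const⟩⟩

end LForm

/-- A prevision on `X`: a Scott-continuous, positively homogeneous map `ℒX → [0,∞]`. -/
@[ext]
structure Prevision (X : Type*) [TopologicalSpace X] where
  /-- the underlying function -/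
  toFun : LForm X → ℝ≥0∞
  scottContinuous : ScottContinuous toFun
  map_smul : ∀ (a : ℝ≥0) (h : LForm X), toFun (a • h) = (a : ℝ≥0∞) * toFun h

namespace Prevision

variable {X : Type*} [TopologicalSpace X]

instance : CoeFun (Prevision X) (fun _ => LForm X → ℝ≥0∞) := ⟨toFun⟩

/-- The weak topology, generated by the sets `[h > r] = {F | F h > r}`. -/
instance : TopologicalSpace (Prevision X) :=
  TopologicalSpace.generateFrom
    {S | ∃ (h : LForm X) (r : ℝ≥0), S = {F : Prevision X | (r : ℝ≥0∞) < F h}}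

/-- Sublinearity: `F (h + h') ≤ F h + F h'`. -/
def IsSublinear (F : Prevision X) : Prop :=
  ∀ h h' : LForm X, F (h + h') ≤ F h + F h'

/-- Subnormalization: `F (1 + h) ≤ 1 + F h`. -/
def IsSubnormalized (F : Prevision X) : Prop :=
  ∀ h : LForm X, F (1 + h) ≤ 1 + F h

/-- Normalization: `F (1 + h) = 1 + F h`. -/
def IsNormalized (F : Prevision X) : Prop :=
  ∀ h : LForm X, F (1 + h) = 1 + F h

end Prevision

/-- The three flavours of previsions: no constraint, subnormalized, normalized. -/
inductive PrevKind
  | plain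
  | subnormalized
  | normalized

/-- The constraint that a flavour puts on a prevision. -/
def PrevKind.Holds {X : Type*} [TopologicalSpace X] : PrevKind → Prevision X → Prop
  | .plain, _ => True
  | .subnormalized, F => F.IsSubnormalized
  | .normalized, F => F.IsNormalized

/-- The space of previsions on `X` of the given flavour, a subspace of the space of all
previsions. -/
abbrev Pred (k : PrevKind) (X : Type*) [TopologicalSpace X] : Type _ :=
  {F : Prevision X // k.Holds F}

/-- The space of sublinear previsions on `X` of the given flavour, a subspace of the space of
all previsions. -/
abbrev PredSub (k : PrevKind) (X : Type*) [TopologicalSpace X] : Type _ :=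
  {F : Prevision X // k.Holds F ∧ F.IsSublinear}

/-- `𝒬Pred_sub(X)`: the nonempty, weakly compact sets of sublinear previsions (of the given
flavour) that are intersections of sets of the form `{F | F h ≥ 1}`, `h ∈ ℒX`. -/
@[ext]
structure QPredSub (k : PrevKind) (X : Type*) [TopologicalSpace X] where
  /-- the underlying set of sublinear previsions -/
  carrier : Set (PredSub k X)
  nonempty : carrier.Nonempty
  isCompact : IsCompact carrier
  exists_eq_iInter : ∃ H : Set (LForm X),
    carrier = ⋂ h ∈ H, {F : PredSub k X | 1 ≤ F.1 h}

/-- The upper Vietoris topology, generated by the sets `{Q | Q ⊆ U}` for `U` weakly open. -/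
instance (k : PrevKind) (X : Type*) [TopologicalSpace X] : TopologicalSpace (QPredSub k X) :=
  TopologicalSpace.generateFrom
    {S | ∃ U : Set (PredSub k X), IsOpen U ∧ S = {Q : QPredSub k X | Q.carrier ⊆ U}}

/-- `minP Q` is the functional `h ↦ inf_{F ∈ Q} F h`. -/
noncomputable def minP {k : PrevKind} {X : Type*} [TopologicalSpace X]
    (Q : Set (PredSub k X)) (h : LForm X) : ℝ≥0∞ :=
  ⨅ F ∈ Q, F.1 h

/-- `nimP P` is the set of sublinear previsions (of the given flavour) that are pointwise
above `P`. -/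
def nimP {k : PrevKind} {X : Type*} [TopologicalSpace X] (P : Pred k X) :
    Set (PredSub k X) :=
  {F | ∀ h : LForm X, P.1 h ≤ F.1 h}

/-!
Fix a prevision `P` and consider the monotone sublinear functionals above `P`, Scott-continuous or
not. By Zorn's lemma each of them lies above a minimal one. If `M` is minimal and
`P (g + u) ≤ M g + y` for all `g`, then `M u ≤ y`: otherwise `h ↦ inf {M g + b y | h ≤ g + b u}`
would be a strictly smaller functional above `P`. For suitable `u` and `y` this shows that `M`
inherits Scott continuity, subnormalization and normalization from `P`, so `M ∈ nimP P`.

Hence every sublinear functional above `P` dominates an element of `nimP P`. For the functional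
`h ↦ inf {b P h₀ | h ≤ b h₀}` this gives `minP (nimP P) = P`; for pointwise limits along
ultrafilters it gives the compactness of `nimP P` and the continuity of `nimP`. Conversely, a set
that is an intersection of sets `{F | 1 ≤ F h}` contains every `F` above its pointwise minimum.
-/

/-- A monotone sublinear functional on an ordered cone `E`, with values in `[0,∞]`. On `ℒX` these
are the sublinear previsions without Scott continuity. Only one inequality is required of the
homogeneity; `IsSublinearFunctional.map_smul` supplies the other. -/
structure IsSublinearFunctional {E : Type*} [AddCommMonoid E] [Module ℝ≥0 E] [Preorder E]
    (G : E → ℝ≥0∞) : Prop where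
  mono : Monotone G
  smul_le : ∀ (a : ℝ≥0) (h : E), G (a • h) ≤ a * G h
  add_le : ∀ h h' : E, G (h + h') ≤ G h + G h'

namespace IsSublinearFunctional

variable {E : Type*} [AddCommMonoid E] [Module ℝ≥0 E] [Preorder E] {G : E → ℝ≥0∞}

theorem map_smul (hG : IsSublinearFunctional G) (a : ℝ≥0) (h : E) : G (a • h) = a * G h := by
  refine le_antisymm (hG.smul_le a h) ?_
  rcases eq_or_ne a 0 with rfl | ha
  · simp
  · calc
      (a : ℝ≥0∞) * G h = a * G (a⁻¹ • a • h) := by rw [inv_smul_smul₀ ha]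
      _ ≤ a * ((a⁻¹ : ℝ≥0) * G (a • h)) := by gcongr; exact hG.smul_le _ _
      _ = G (a • h) := by
        rw [← mul_assoc, ← ENNReal.coe_mul, mul_inv_cancel₀ ha, ENNReal.coe_one, one_mul]

theorem map_zero (hG : IsSublinearFunctional G) : G 0 = 0 := by
  simpa using hG.map_smul 0 0

theorem iInf_of_directed {ι : Type*} [Nonempty ι] {G : ι → E → ℝ≥0∞}
    (hG : ∀ i, IsSublinearFunctional (G i)) (hdir : Directed (· ≥ ·) G) :
    IsSublinearFunctional fun h => ⨅ i, G i h where
  mono _ _ hh := iInf_mono fun i => (hG i).mono hh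
  smul_le a h := by
    rw [ENNReal.mul_iInf' (by simp) fun _ => inferInstance]
    exact iInf_mono fun i => (hG i).smul_le a h
  add_le h h' := ENNReal.le_iInf_add_iInf fun i j =>
    let ⟨k, hki, hkj⟩ := hdir i j
    (iInf_le _ k).trans (((hG k).add_le h h').trans (add_le_add (hki h) (hkj h')))

theorem of_tendsto {ι : Type*} {l : Filter ι} [l.NeBot] {F : ι → E → ℝ≥0∞}
    (hF : ∀ i, IsSublinearFunctional (F i)) (hG : Filter.Tendsto F l (nhds G)) :
    IsSublinearFunctional G := by
  rw [tendsto_pi_nhds] at hG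
  exact
    { mono := fun h h' hh =>
        le_of_tendsto_of_tendsto' (hG h) (hG h') fun i => (hF i).mono hh
      smul_le := fun a h =>
        le_of_tendsto_of_tendsto' (hG _)
          (ENNReal.Tendsto.const_mul (hG h) (Or.inr ENNReal.coe_ne_top)) fun i => (hF i).smul_le a h
      add_le := fun h h' =>
        le_of_tendsto_of_tendsto' (hG _) ((hG h).add (hG h')) fun i => (hF i).add_le h h' }

end IsSublinearFunctional

section SublinearLowering

variable {E : Type*} [AddCommMonoid E] [Module ℝ≥0 E] [Preorder E] {P M : E → ℝ≥0∞}

/-- The largest monotone sublinear functional that lies below `M` and has value at most `y` at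
`u`, for a monotone sublinear functional `M`. -/
noncomputable def sublinearLowering (M : E → ℝ≥0∞) (u : E) (y : ℝ≥0∞) (h : E) : ℝ≥0∞ :=
  ⨅ z : {z : E × ℝ≥0 // h ≤ z.1 + z.2 • u}, M z.1.1 + z.1.2 * y

theorem isSublinearFunctional_sublinearLowering [IsOrderedAddMonoid E] [PosSMulMono ℝ≥0 E]
    (hM : IsSublinearFunctional M) (u : E) (y : ℝ≥0∞) :
    IsSublinearFunctional (sublinearLowering M u y) where
  mono _ _ hh := le_iInf fun ⟨z, hz⟩ => iInf_le_of_le ⟨z, hh.trans hz⟩ le_rfl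
  smul_le a h := by
    have : Nonempty {z : E × ℝ≥0 // h ≤ z.1 + z.2 • u} := ⟨⟨(h, 0), by simp⟩⟩
    rw [sublinearLowering, sublinearLowering, ENNReal.mul_iInf' (by simp) fun _ => this]
    refine le_iInf fun ⟨(g, b), hgb⟩ => iInf_le_of_le ⟨(a • g, a * b), ?_⟩ ?_
    · rw [mul_smul, ← smul_add]
      exact smul_le_smul_of_nonneg_left hgb zero_le
    · rw [hM.map_smul, ENNReal.coe_mul, mul_assoc, mul_add]
  add_le h h' := by
    refine ENNReal.le_iInf_add_iInf fun ⟨(g, b), hgb⟩ ⟨(g', b'), hgb'⟩ =>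
      iInf_le_of_le ⟨(g + g', b + b'), ?_⟩ ?_
    · rw [add_smul, add_add_add_comm]
      exact add_le_add hgb hgb'
    · rw [ENNReal.coe_add, add_mul, add_add_add_comm (M g)]
      exact add_le_add_left (hM.add_le g g') _

theorem sublinearLowering_le (M : E → ℝ≥0∞) (u : E) (y : ℝ≥0∞) : sublinearLowering M u y ≤ M :=
  fun h => iInf_le_of_le ⟨(h, 0), by simp⟩ (by simp)

theorem sublinearLowering_apply_self_le (hM : IsSublinearFunctional M) (u : E) (y : ℝ≥0∞) :
    sublinearLowering M u y u ≤ y :=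
  iInf_le_of_le ⟨(0, 1), by simp⟩ (by simp [hM.map_zero])

theorem le_sublinearLowering (hP : Monotone P) (hPs : ∀ (a : ℝ≥0) (h : E), P (a • h) = a * P h)
    (hM : IsSublinearFunctional M) (hPM : P ≤ M) {u : E} {y : ℝ≥0∞}
    (hu : ∀ g, P (g + u) ≤ M g + y) : P ≤ sublinearLowering M u y := by
  refine fun h => le_iInf fun ⟨(g, b), hgb⟩ => (hP hgb).trans ?_
  rcases eq_or_ne b 0 with rfl | hb
  · simpa using hPM g
  · calc
      P (g + b • u) = b * P (b⁻¹ • g + u) := by rw [← hPs, smul_add, smul_inv_smul₀ hb]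
      _ ≤ b * (M (b⁻¹ • g) + y) := by gcongr; exact hu _
      _ = M g + b * y := by rw [mul_add, ← hM.map_smul, smul_inv_smul₀ hb]

end SublinearLowering

/-- The largest monotone sublinear functional on an ordered cone: `0` at the elements below `0`, and
`∞` at all others. -/
noncomputable def sublinearTop {E : Type*} [Zero E] [Preorder E] (h : E) : ℝ≥0∞ :=
  ⨅ _ : h ≤ 0, 0

section SublinearTop

variable {E : Type*} [AddCommMonoid E] [Module ℝ≥0 E] [Preorder E] [IsOrderedAddMonoid E]
  [PosSMulMono ℝ≥0 E]

theorem isSublinearFunctional_sublinearTop :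
    IsSublinearFunctional (sublinearTop : E → ℝ≥0∞) where
  mono _ _ hh := le_iInf fun h0 => iInf_le_of_le (hh.trans h0) le_rfl
  smul_le a h := by
    rcases eq_or_ne a 0 with rfl | ha
    · simp [sublinearTop]
    · rw [sublinearTop, sublinearTop, ENNReal.mul_iInf_of_ne (by simpa) ENNReal.coe_ne_top]
      exact le_iInf fun h0 => iInf_le_of_le (smul_nonpos_of_nonneg_of_nonpos zero_le h0) (by simp)
  add_le _ _ := ENNReal.le_iInf_add_iInf fun h0 h0' =>
    iInf_le_of_le (add_nonpos h0 h0') (by simp)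

theorem exists_isSublinearFunctional_ge_apply_le {P : E → ℝ≥0∞} (hP : Monotone P)
    (hPs : ∀ (a : ℝ≥0) (h : E), P (a • h) = a * P h) (u : E) :
    ∃ G, IsSublinearFunctional G ∧ P ≤ G ∧ G u ≤ P u := by
  have hP0 : P 0 = 0 := by simpa using hPs 0 0
  have hTop : IsSublinearFunctional (sublinearTop : E → ℝ≥0∞) :=
    isSublinearFunctional_sublinearTop
  refine ⟨sublinearLowering sublinearTop u (P u),
    isSublinearFunctional_sublinearLowering hTop u (P u),
    le_sublinearLowering hP hPs hTop (fun h => le_iInf fun h0 => (hP h0).trans_eq hP0) ?_,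
    sublinearLowering_apply_self_le hTop u (P u)⟩
  intro g
  by_cases hg : g ≤ 0
  · exact (hP (add_le_of_nonpos_left hg)).trans le_add_self
  · simp [sublinearTop, hg]

end SublinearTop

/-- `M` is minimal among the monotone sublinear functionals above `P`. -/
def IsMinimalSublinearAbove {E : Type*} [AddCommMonoid E] [Module ℝ≥0 E] [Preorder E]
    (P M : E → ℝ≥0∞) : Prop :=
  Minimal (fun G => IsSublinearFunctional G ∧ P ≤ G) M

theorem IsSublinearFunctional.exists_isMinimalSublinearAbove_le
    {E : Type*} [AddCommMonoid E] [Module ℝ≥0 E] [Preorder E] {P G : E → ℝ≥0∞}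
    (hG : IsSublinearFunctional G) (hPG : P ≤ G) : ∃ M ≤ G, IsMinimalSublinearAbove P M := by
  refine zorn_le_nonempty₀ (α := (E → ℝ≥0∞)ᵒᵈ) {M | IsSublinearFunctional M ∧ P ≤ M} ?_ G ⟨hG, hPG⟩
  intro c hcS hc N hN
  have : Nonempty c := ⟨⟨N, hN⟩⟩
  exact ⟨fun h => ⨅ M : c, M.1 h,
    ⟨iInf_of_directed (fun M => (hcS M.2).1) hc.directed, fun h => le_iInf fun M => (hcS M.2).2 h⟩,
    fun M hM h => iInf_le (fun M : c => M.1 h) ⟨M, hM⟩⟩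

namespace IsMinimalSublinearAbove

variable {E : Type*} [AddCommMonoid E] [Module ℝ≥0 E] [Preorder E] {P M : E → ℝ≥0∞}

theorem isSublinearFunctional (hM : IsMinimalSublinearAbove P M) : IsSublinearFunctional M :=
  hM.prop.1

theorem le (hM : IsMinimalSublinearAbove P M) : P ≤ M :=
  hM.prop.2

variable [IsOrderedAddMonoid E] [PosSMulMono ℝ≥0 E]

theorem apply_le (hM : IsMinimalSublinearAbove P M) (hP : Monotone P)
    (hPs : ∀ (a : ℝ≥0) (h : E), P (a • h) = a * P h) {u : E} {y : ℝ≥0∞}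
    (hu : ∀ g, P (g + u) ≤ M g + y) : M u ≤ y :=
  have hMs := hM.isSublinearFunctional
  have hMlow : M ≤ sublinearLowering M u y :=
    hM.le_of_le ⟨isSublinearFunctional_sublinearLowering hMs u y,
      le_sublinearLowering hP hPs hMs hM.le hu⟩ (sublinearLowering_le M u y)
  (hMlow u).trans (sublinearLowering_apply_self_le hMs u y)

theorem scottContinuous (hM : IsMinimalSublinearAbove P M)
    (hadd : ∀ g : E, ScottContinuous (g + ·)) (hP : ScottContinuous P)
    (hPs : ∀ (a : ℝ≥0) (h : E), P (a • h) = a * P h) : ScottContinuous M := by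
  intro d hne hdir s hs
  have hMs := hM.isSublinearFunctional
  refine ⟨hMs.mono.mem_upperBounds_image hs.1, fun y hy => ?_⟩
  refine hM.apply_le hP.monotone hPs fun g => ?_
  have hlub : IsLUB ((fun f => P (g + f)) '' d) (P (g + s)) :=
    (hadd g).comp hP hne hdir hs
  rw [isLUB_le_iff hlub, mem_upperBounds, Set.forall_mem_image]
  intro f hf
  calc
    P (g + f) ≤ M (g + f) := hM.le _
    _ ≤ M g + M f := hMs.add_le g f
    _ ≤ M g + y := by gcongr; exact hy (Set.mem_image_of_mem M hf)

theorem apply_add_le (hM : IsMinimalSublinearAbove P M) (hP : Monotone P)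
    (hPs : ∀ (a : ℝ≥0) (h : E), P (a • h) = a * P h) {e : E} {c : ℝ≥0∞}
    (he : ∀ h, P (e + h) ≤ c + P h) (h : E) : M (e + h) ≤ c + M h := by
  refine hM.apply_le hP hPs fun g => ?_
  calc
    P (g + (e + h)) = P (e + (g + h)) := by rw [add_left_comm]
    _ ≤ c + P (g + h) := he _
    _ ≤ c + (M g + M h) := by
      gcongr
      exact (hM.le _).trans (hM.isSublinearFunctional.add_le g h)
    _ = M g + (c + M h) := add_left_comm _ _ _

theorem add_le_apply_add (hM : IsMinimalSublinearAbove P M) (hP : Monotone P)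
    (hPs : ∀ (a : ℝ≥0) (h : E), P (a • h) = a * P h) {e : E} {c : ℝ≥0∞} (hc : c ≠ ∞)
    (he : ∀ h, c + P h ≤ P (e + h)) (h : E) : c + M h ≤ M (e + h) := by
  have hcM : c ≤ M (e + h) := le_self_add.trans ((he h).trans (hM.le _))
  suffices hle : M h ≤ M (e + h) - c from
    (add_le_add_right hle c).trans_eq (add_tsub_cancel_of_le hcM)
  refine hM.apply_le hP hPs fun g => (ENNReal.add_le_add_iff_left hc).1 ?_
  calc
    c + P (g + h) ≤ P (e + (g + h)) := he _
    _ ≤ M (e + (g + h)) := hM.le _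
    _ = M (g + (e + h)) := by rw [add_left_comm]
    _ ≤ M g + M (e + h) := hM.isSublinearFunctional.add_le _ _
    _ = c + (M g + (M (e + h) - c)) := by rw [add_left_comm, add_tsub_cancel_of_le hcM]

end IsMinimalSublinearAbove

namespace LForm

variable {X : Type*} [TopologicalSpace X]

instance : Zero (LForm X) := ⟨⟨fun _ => 0, lowerSemicontinuous_const⟩⟩

noncomputable instance : AddCommMonoid (LForm X) where
  add_assoc _ _ _ := Subtype.ext (add_assoc _ _ _)
  zero_add _ := Subtype.ext (zero_add _)
  add_zero _ := Subtype.ext (add_zero _)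
  add_comm _ _ := Subtype.ext (add_comm _ _)
  nsmul := nsmulRec

noncomputable instance : Module ℝ≥0 (LForm X) :=
  Subtype.val_injective.module ℝ≥0
    { toFun := Subtype.val, map_zero' := rfl, map_add' := fun _ _ => rfl } fun _ _ => rfl

instance : IsOrderedAddMonoid (LForm X) where
  add_le_add_left _ _ hh _ x := add_le_add_left (hh x) _

instance : PosSMulMono ℝ≥0 (LForm X) where
  smul_le_smul_of_nonneg_left _ _ _ _ hh x := mul_le_mul_right (hh x) _

theorem apply_eq_biSup_of_isLUB {d : Set (LForm X)} {s : LForm X} (hs : IsLUB d s) (x : X) :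
    s.1 x = ⨆ h ∈ d, h.1 x := by
  let t : LForm X := ⟨fun x => ⨆ h ∈ d, h.1 x, lowerSemicontinuous_biSup fun h _ => h.2⟩
  have ht : IsLUB d t :=
    ⟨fun h hh x => le_iSup₂ (f := fun (h : LForm X) (_ : h ∈ d) => h.1 x) h hh,
      fun _ hb x => iSup₂_le fun _ hh => hb hh x⟩
  rw [hs.unique ht]

theorem scottContinuous_add_left (g : LForm X) : ScottContinuous (g + ·) := by
  intro d hne _ s hs
  refine ⟨?_, fun b hb x => ?_⟩
  · rintro _ ⟨h, hh, rfl⟩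
    exact add_le_add_right (hs.1 hh) g
  · calc
      g.1 x + s.1 x = ⨆ h ∈ d, g.1 x + h.1 x := by
        rw [apply_eq_biSup_of_isLUB hs, ENNReal.add_biSup hne]
      _ ≤ b.1 x := iSup₂_le fun h hh => hb (Set.mem_image_of_mem _ hh) x

end LForm

namespace Prevision

variable {X : Type*} [TopologicalSpace X]

theorem monotone (F : Prevision X) : Monotone F :=
  F.scottContinuous.monotone

theorem IsSublinear.isSublinearFunctional {F : Prevision X} (hF : F.IsSublinear) :
    IsSublinearFunctional F where
  mono := F.monotone
  smul_le a h := (F.map_smul a h).le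
  add_le := hF

theorem one_le_apply_inv_smul_iff (F : Prevision X) {r : ℝ≥0} (hr : r ≠ 0) (h : LForm X) :
    1 ≤ F (r⁻¹ • h) ↔ (r : ℝ≥0∞) ≤ F h := by
  rw [F.map_smul, ENNReal.coe_inv hr, mul_comm, ← div_eq_mul_inv,
    ENNReal.le_div_iff_mul_le (by simp [hr]) (by simp), one_mul]

theorem forall_apply_le_iff (P F : Prevision X) :
    (∀ h, P h ≤ F h) ↔ ∀ h, 1 ≤ P h → 1 ≤ F h := by
  refine ⟨fun hPF h hh => hh.trans (hPF h), fun hPF h => ENNReal.le_of_forall_nnreal_lt ?_⟩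
  intro r hr
  rcases eq_or_ne r 0 with rfl | hr0
  · simp
  · exact (F.one_le_apply_inv_smul_iff hr0 h).1
      (hPF _ ((P.one_le_apply_inv_smul_iff hr0 h).2 hr.le))

theorem lowerSemicontinuous_apply (h : LForm X) :
    LowerSemicontinuous fun F : Prevision X => F h := by
  refine lowerSemicontinuous_iff_isOpen_preimage.2 fun y => ?_
  rcases eq_or_ne y ⊤ with rfl | hy
  · simp
  · lift y to ℝ≥0 using hy
    exact TopologicalSpace.isOpen_generateFrom_of_mem ⟨h, y, rfl⟩

theorem lowerSemicontinuous_subtype_apply {p : Prevision X → Prop} (h : LForm X) :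
    LowerSemicontinuous fun F : Subtype p => F.1 h :=
  (lowerSemicontinuous_apply h).comp continuous_subtype_val

theorem tendsto_nhds_of_tendsto_of_le {ι : Type*} {l : Filter ι} {F : ι → Prevision X}
    {F₀ : Prevision X} {G : LForm X → ℝ≥0∞} (hF : Filter.Tendsto (fun i => ⇑(F i)) l (nhds G))
    (hG : F₀ ≤ G) : Filter.Tendsto F l (nhds F₀) := by
  refine TopologicalSpace.tendsto_nhds_generateFrom_iff.2 ?_
  rintro _ ⟨h, r, rfl⟩ (hr : r < F₀ h)
  exact (tendsto_pi_nhds.1 hF h).eventually_const_lt (hr.trans_le (hG h))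

end Prevision

section NimP

open Filter Topology

variable {k : PrevKind} {X : Type*} [TopologicalSpace X]

theorem PrevKind.Holds.of_isMinimalSublinearAbove {P F : Prevision X} (hP : k.Holds P)
    (hF : IsMinimalSublinearAbove P F) : k.Holds F := by
  cases k with
  | plain => trivial
  | subnormalized => exact hF.apply_add_le P.monotone P.map_smul hP
  | normalized =>
    exact fun h => le_antisymm (hF.apply_add_le P.monotone P.map_smul (fun h => (hP h).le) h)
      (hF.add_le_apply_add P.monotone P.map_smul ENNReal.one_ne_top (fun h => (hP h).ge) h)

theorem exists_mem_nimP_le (P : Pred k X) {G : LForm X → ℝ≥0∞} (hG : IsSublinearFunctional G)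
    (hPG : P.1 ≤ G) : ∃ F ∈ nimP P, F.1 ≤ G := by
  obtain ⟨M, hMG, hM⟩ := hG.exists_isMinimalSublinearAbove_le hPG
  let F : Prevision X :=
    { toFun := M
      scottContinuous :=
        hM.scottContinuous LForm.scottContinuous_add_left P.1.scottContinuous P.1.map_smul
      map_smul := hM.isSublinearFunctional.map_smul }
  exact ⟨⟨F, P.2.of_isMinimalSublinearAbove hM, hM.isSublinearFunctional.add_le⟩, hM.le, hMG⟩

theorem exists_mem_nimP_apply_eq (P : Pred k X) (h : LForm X) :
    ∃ F ∈ nimP P, F.1 h = P.1 h := by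
  obtain ⟨G, hG, hPG, hGh⟩ := exists_isSublinearFunctional_ge_apply_le P.1.monotone P.1.map_smul h
  obtain ⟨F, hF, hFG⟩ := exists_mem_nimP_le P hG hPG
  exact ⟨F, hF, le_antisymm ((hFG h).trans hGh) (hF h)⟩

theorem nimP_eq_iInter (P : Pred k X) :
    nimP P = ⋂ h ∈ {h : LForm X | 1 ≤ P.1 h}, {F : PredSub k X | 1 ≤ F.1 h} := by
  ext F
  rw [Set.mem_iInter₂]
  exact P.1.forall_apply_le_iff F.1

theorem exists_mem_nimP_tendsto {ι : Type*} (l : Ultrafilter ι) {F : ι → PredSub k X}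
    {P : ι → Pred k X} {P₀ : Pred k X} (hP : Tendsto P l (𝓝 P₀))
    (hF : ∀ᶠ i in l, F i ∈ nimP (P i)) : ∃ F₀ ∈ nimP P₀, Tendsto F l (𝓝 F₀) := by
  obtain ⟨G, hG⟩ : ∃ G, Tendsto (fun i => ⇑(F i).1) l (𝓝 G) :=
    ⟨_, (l.map fun i => ⇑(F i).1).le_nhds_lim⟩
  have hPG : P₀.1 ≤ G := fun h => le_of_forall_lt_imp_le_of_dense fun r hr => by
    refine ge_of_tendsto (tendsto_pi_nhds.1 hG h) ?_
    filter_upwards [hF, hP.eventually (Prevision.lowerSemicontinuous_subtype_apply h P₀ r hr)]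
      with i hFi hri
    exact hri.le.trans (hFi h)
  obtain ⟨F₀, hF₀, hle⟩ := exists_mem_nimP_le P₀
    (.of_tendsto (fun i => (F i).2.2.isSublinearFunctional) hG) hPG
  exact ⟨F₀, hF₀, tendsto_subtype_rng.2 (Prevision.tendsto_nhds_of_tendsto_of_le hG hle)⟩

theorem isCompact_nimP (P : Pred k X) : IsCompact (nimP P) :=
  isCompact_iff_ultrafilter_le_nhds.2 fun l hl =>
    exists_mem_nimP_tendsto l (F := id) (tendsto_const_nhds (x := P)) (le_principal_iff.1 hl)

theorem isOpen_setOf_nimP_subset {U : Set (PredSub k X)} (hU : IsOpen U) :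
    IsOpen {P : Pred k X | nimP P ⊆ U} := by
  refine isOpen_iff_ultrafilter.2 fun P₀ hP₀ l hl => ?_
  by_contra hnot
  have hex : ∀ᶠ P in (l : Filter (Pred k X)), ∃ F ∈ nimP P, F ∉ U := by
    filter_upwards [Ultrafilter.compl_mem_iff_notMem.2 hnot] with P hP
    exact Set.not_subset.1 hP
  obtain ⟨F, hF⟩ := hex.choice
  obtain ⟨F₀, hF₀, hlim⟩ := exists_mem_nimP_tendsto l (P := id) hl (hF.mono fun _ hP => hP.1)
  obtain ⟨P, hPU, hP⟩ := ((hlim.eventually (hU.mem_nhds (hP₀ hF₀))).and hF).exists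
  exact hP.2 hPU

/-- `nimP P` as an element of `𝒬Pred_sub(X)`. -/
def nimQ (P : Pred k X) : QPredSub k X where
  carrier := nimP P
  nonempty := let ⟨F, hF, _⟩ := exists_mem_nimP_apply_eq P 0; ⟨F, hF⟩
  isCompact := isCompact_nimP P
  exists_eq_iInter := ⟨_, nimP_eq_iInter P⟩

theorem continuous_nimQ : Continuous (nimQ : Pred k X → QPredSub k X) := by
  refine continuous_generateFrom_iff.2 ?_
  rintro _ ⟨U, hU, rfl⟩
  exact isOpen_setOf_nimP_subset hU

end NimP

section MinP

variable {k : PrevKind} {X : Type*} [TopologicalSpace X] {Q : Set (PredSub k X)}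

theorem minP_le {F : PredSub k X} (hF : F ∈ Q) (h : LForm X) : minP Q h ≤ F.1 h :=
  iInf₂_le F hF

theorem monotone_minP (Q : Set (PredSub k X)) : Monotone (minP Q) :=
  fun _ _ hh => iInf₂_mono fun F _ => F.1.monotone hh

theorem exists_apply_eq_minP (hQ : IsCompact Q) (hne : Q.Nonempty) (h : LForm X) :
    ∃ F ∈ Q, F.1 h = minP Q h := by
  have hlsc : LowerSemicontinuousOn (fun F : PredSub k X => F.1 h) Q :=
    (Prevision.lowerSemicontinuous_subtype_apply h).lowerSemicontinuousOn Q
  obtain ⟨F, hF, hmin⟩ := hlsc.exists_isMinOn hne hQ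
  exact ⟨F, hF, le_antisymm (le_iInf₂ fun _ hF' => hmin hF') (minP_le hF h)⟩

theorem lt_minP_iff (hQ : IsCompact Q) (hne : Q.Nonempty) {h : LForm X} {r : ℝ≥0∞} :
    r < minP Q h ↔ ∀ F ∈ Q, r < F.1 h := by
  refine ⟨fun hr F hF => hr.trans_le (minP_le hF h), fun hr => ?_⟩
  obtain ⟨F, hF, hFh⟩ := exists_apply_eq_minP hQ hne h
  exact hFh ▸ hr F hF

theorem scottContinuous_minP (hQ : IsCompact Q) (hne : Q.Nonempty) :
    ScottContinuous (minP Q) := by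
  intro d hd hdir s hs
  refine ⟨(monotone_minP Q).mem_upperBounds_image hs.1, fun b hb => ?_⟩
  refine le_of_forall_lt_imp_le_of_dense fun r hr => ?_
  have : Nonempty d := hd.to_subtype
  obtain ⟨g, hg⟩ : ∃ g : d, Q ⊆ {F | r < F.1 g.1} := by
    refine hQ.elim_directed_cover _
      (fun g => (Prevision.lowerSemicontinuous_subtype_apply g.1).isOpen_preimage r) ?_ ?_
    · intro F hF
      obtain ⟨_, ⟨g, hg, rfl⟩, hrg⟩ :=
        (lt_isLUB_iff (F.1.scottContinuous hd hdir hs)).1 ((lt_minP_iff hQ hne).1 hr F hF)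
      exact Set.mem_iUnion.2 ⟨⟨g, hg⟩, hrg⟩
    · intro g g'
      obtain ⟨f, hf, hgf, hgf'⟩ := hdir g.1 g.2 g'.1 g'.2
      exact ⟨⟨f, hf⟩, fun F hF => lt_of_lt_of_le hF (F.1.monotone hgf),
        fun F hF => lt_of_lt_of_le hF (F.1.monotone hgf')⟩
  exact ((lt_minP_iff hQ hne).2 hg).le.trans (hb (Set.mem_image_of_mem _ g.2))

theorem add_minP (Q : Set (PredSub k X)) (c : ℝ≥0∞) (h : LForm X) :
    c + minP Q h = ⨅ F ∈ Q, c + F.1 h := by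
  simp only [minP, ENNReal.add_iInf]

theorem minP_smul (hQ : Q.Nonempty) (a : ℝ≥0) (h : LForm X) :
    minP Q (a • h) = a * minP Q h := by
  have : Nonempty Q := hQ.to_subtype
  simp only [minP, ← iInf_subtype'', Prevision.map_smul]
  exact (ENNReal.mul_iInf' (by simp) fun _ => this).symm

theorem minP_nimP (P : Pred k X) : minP (nimP P) = P.1 := by
  funext h
  obtain ⟨F, hF, hFh⟩ := exists_mem_nimP_apply_eq P h
  exact le_antisymm (hFh ▸ minP_le hF h) (le_iInf₂ fun F' hF' => hF' h)

end MinP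

namespace QPredSub

variable {k : PrevKind} {X : Type*} [TopologicalSpace X]

/-- `minP Q` as a prevision. -/
noncomputable def minPrevision (Q : QPredSub k X) : Prevision X where
  toFun := minP Q.carrier
  scottContinuous := scottContinuous_minP Q.isCompact Q.nonempty
  map_smul := minP_smul Q.nonempty

theorem holds_minPrevision (Q : QPredSub k X) : k.Holds Q.minPrevision := by
  cases k with
  | plain => trivial
  | subnormalized =>
    exact fun h => (iInf₂_mono fun F _ => F.2.1 h).trans_eq (add_minP _ 1 h).symm
  | normalized =>
    exact fun h => (biInf_congr fun F _ => F.2.1 h).trans (add_minP _ 1 h).symm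

/-- `minP Q` as an element of the space of previsions of the same flavour as those in `Q`. -/
noncomputable def minPred (Q : QPredSub k X) : Pred k X :=
  ⟨Q.minPrevision, Q.holds_minPrevision⟩

theorem nimP_minPred (Q : QPredSub k X) : nimP Q.minPred = Q.carrier := by
  refine Set.Subset.antisymm (fun F hF => ?_) fun F hF h => minP_le hF h
  obtain ⟨H, hH⟩ := Q.exists_eq_iInter
  have hQ : ∀ F, F ∈ Q.carrier ↔ ∀ h ∈ H, 1 ≤ F.1 h := fun F => by
    rw [hH]
    exact Set.mem_iInter₂
  exact (hQ F).2 fun h hh => (le_iInf₂ fun F' hF' => (hQ F').1 hF' h hh).trans (hF h)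

theorem continuous_minPred : Continuous (minPred : QPredSub k X → Pred k X) := by
  refine continuous_induced_rng.2 (continuous_generateFrom_iff.2 ?_)
  rintro _ ⟨h, r, rfl⟩
  refine TopologicalSpace.isOpen_generateFrom_of_mem
    ⟨{F : PredSub k X | r < F.1 h},
      (Prevision.lowerSemicontinuous_subtype_apply h).isOpen_preimage r, ?_⟩
  ext Q
  exact lt_minP_iff Q.isCompact Q.nonempty

end QPredSub

/-- `minP` and `nimP` as mutually inverse homeomorphisms. -/
noncomputable def minPHomeomorph (k : PrevKind) (X : Type*) [TopologicalSpace X] :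
    QPredSub k X ≃ₜ Pred k X where
  toFun := QPredSub.minPred
  invFun := nimQ
  left_inv Q := QPredSub.ext Q.nimP_minPred
  right_inv P := Subtype.ext (Prevision.ext (minP_nimP P))
  continuous_toFun := QPredSub.continuous_minPred
  continuous_invFun := continuous_nimQ

/-- For each flavour of previsions (unconstrained, subnormalized, normalized), the infimum that
defines `minP Q` is attained, and `minP` and `nimP` are mutually inverse homeomorphisms between
`𝒬Pred_sub(X)` and the space of previsions on `X`. -/
theorem statement17 (k : PrevKind) (X : Type*) [TopologicalSpace X] :
    (∀ (Q : QPredSub k X) (h : LForm X), ∃ F ∈ Q.carrier, F.1 h = minP Q.carrier h) ∧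
    ∃ e : QPredSub k X ≃ₜ Pred k X,
      (∀ (Q : QPredSub k X) (h : LForm X), (e Q).1 h = minP Q.carrier h) ∧
      (∀ P : Pred k X, (e.symm P).carrier = nimP P) :=
  ⟨fun Q => exists_apply_eq_minP Q.isCompact Q.nonempty,
    minPHomeomorph k X, fun _ _ => rfl, fun _ => rfl⟩
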